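/- Kullback–Leibler bound between two Gaussian factor-regression models (Lemma B.4). Let A ∈ ℝ^{p×K}, let Σ_Z be K×K symmetric positive definite, let Γ be p×p symmetric positive definite, and let σ² > 0. For β ∈ ℝ^K let P_β denote the centered Gaussian distribution on ℝ^{p+1} with covariance matrix [[A Σ_Z Aᵀ + Γ, A Σ_Z β], [βᵀ Σ_Z Aᵀ, βᵀ Σ_Z β + σ²]] (this matrix is positive definite). Set G = Σ_Z^{-1} + Aᵀ Γ^{-1} A. Then for all β₁, β₂ ∈ ℝ^K, the Kullback–Leibler divergence satisfies KL(P_{β₁} ‖ P_{β₂}) ≤ ( |β₁ᵀ G^{-1} β₁ − β₂ᵀ G^{-1} β₂| + ‖Σ_Z − G^{-1}‖_op · ‖β₁ − β₂‖₂² ) / ( σ² + min(‖β₁‖₂², ‖β₂‖₂²) / ‖G‖_op ). -/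

import Mathlib

open Matrix MeasureTheory ProbabilityTheory

noncomputable section

/-- The standard Gaussian measure on `ι → ℝ`. -/
def stdGaussian (ι : Type*) [Fintype ι] : Measure (ι → ℝ) :=
  Measure.pi fun _ => gaussianReal 0 1

/-- The covariance matrix of the Gaussian pair `(X, Y)`:
`[[A Σ_Z Aᵀ + Γ, A Σ_Z β], [βᵀ Σ_Z Aᵀ, βᵀ Σ_Z β + σ²]]`, indexed by `Fin p ⊕ Unit`. -/
def fullCov {p K : ℕ} (A : Matrix (Fin p) (Fin K) ℝ) (S : Matrix (Fin K) (Fin K) ℝ)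
    (Γ : Matrix (Fin p) (Fin p) ℝ) (σ2 : ℝ) (β : Fin K → ℝ) :
    Matrix (Fin p ⊕ Unit) (Fin p ⊕ Unit) ℝ :=
  Matrix.fromBlocks (A * S * Aᵀ + Γ)
    (Matrix.of fun i _ => (A.mulVec (S.mulVec β)) i)
    (Matrix.of fun _ j => (A.mulVec (S.mulVec β)) j)
    (Matrix.of fun _ _ => β ⬝ᵥ S.mulVec β + σ2)

/-- The operator (spectral) norm of a real square matrix. -/
def opNorm {K : ℕ} (M : Matrix (Fin K) (Fin K) ℝ) : ℝ :=
  ‖Matrix.toEuclideanCLM (𝕜 := ℝ) M‖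

/-- The Kullback–Leibler divergence `KL(P ‖ Q) = ∫ log (dP/dQ) dP`. -/
def klDivReal {α : Type*} [MeasurableSpace α] (P Q : Measure α) : ℝ :=
  ∫ x, Real.log (P.rnDeriv Q x).toReal ∂P

/-!
Both covariance matrices have the same covariate block `X = A S Aᵀ + Γ`, so `P_β` is the law of
`(x, wᵀ x + ε)` with `x` of covariance `X`, `w = X⁻¹ A S β` the best linear predictor and `ε` an
independent noise of variance `v = v(β)`. In these coordinates the determinants and the trace in the
Gaussian formula for the divergence collapse to the scalar expression
`KL = (log (v₂ / v₁) - 1 + ((w₁ - w₂)ᵀ X (w₁ - w₂) + v₁) / v₂) / 2`.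
By the Woodbury identity, `wᵀ X w = βᵀ (S - G⁻¹) β` and hence `v = σ² + βᵀ G⁻¹ β`. The bound follows
from `log t ≤ t - 1`, from `βᵀ (S - G⁻¹) β ≤ ‖S - G⁻¹‖ |β|²` and from `|β|² / ‖G‖ ≤ βᵀ G⁻¹ β`.
-/

section KullbackLeibler

lemma klDivReal_withDensity {α : Type*} [MeasurableSpace α] {ν : Measure α} [SigmaFinite ν]
    {f g : α → ℝ} (hf : Measurable f) (hg : Measurable g) (hf_pos : ∀ x, 0 < f x)
    (hg_pos : ∀ x, 0 < g x) :
    klDivReal (ν.withDensity fun x => ENNReal.ofReal (f x))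
        (ν.withDensity fun x => ENNReal.ofReal (g x)) =
      ∫ x, (Real.log (f x) - Real.log (g x)) ∂ν.withDensity fun x => ENNReal.ofReal (f x) := by
  set P := ν.withDensity fun x => ENNReal.ofReal (f x)
  have : SigmaFinite P := SigmaFinite.withDensity_ofReal f
  have hPν : P.rnDeriv ν =ᵐ[P] fun x => ENNReal.ofReal (f x) :=
    (withDensity_absolutelyContinuous _ _).ae_le
      (Measure.rnDeriv_withDensity ν hf.ennreal_ofReal)
  have hPQ : P.rnDeriv (ν.withDensity fun x => ENNReal.ofReal (g x)) =ᵐ[P]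
      fun x => (ENNReal.ofReal (g x))⁻¹ * P.rnDeriv ν x :=
    (withDensity_absolutelyContinuous _ _).ae_le (Measure.rnDeriv_withDensity_right P ν
      hg.ennreal_ofReal.aemeasurable
      (ae_of_all _ fun x => (ENNReal.ofReal_pos.2 (hg_pos x)).ne')
      (ae_of_all _ fun x => ENNReal.ofReal_ne_top))
  refine integral_congr_ae ?_
  filter_upwards [hPν, hPQ] with x hx hx'
  rw [hx', hx, ENNReal.toReal_mul, ENNReal.toReal_inv, ENNReal.toReal_ofReal (hf_pos x).le,
    ENNReal.toReal_ofReal (hg_pos x).le, inv_mul_eq_div,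
    Real.log_div (hf_pos x).ne' (hg_pos x).ne']

end KullbackLeibler

section StandardGaussian

variable {ι : Type*} [Fintype ι]

instance isProbabilityMeasure_stdGaussian : IsProbabilityMeasure (_root_.stdGaussian ι) :=
  inferInstanceAs (IsProbabilityMeasure (Measure.pi _))

lemma memLp_eval_stdGaussian (i : ι) : MemLp (fun z : ι → ℝ => z i) 2 (_root_.stdGaussian ι) :=
  (memLp_id_gaussianReal 2).comp_measurePreserving
    (measurePreserving_eval (fun _ : ι => gaussianReal 0 1) i)

lemma integral_eval_stdGaussian (i : ι) : ∫ z : ι → ℝ, z i ∂_root_.stdGaussian ι = 0 :=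
  (integral_comp_eval (μ := fun _ : ι => gaussianReal 0 1) (f := id)
    aestronglyMeasurable_id).trans integral_id_gaussianReal

lemma integrable_eval_mul_eval_stdGaussian (i j : ι) :
    Integrable (fun z : ι → ℝ => z i * z j) (_root_.stdGaussian ι) :=
  (memLp_eval_stdGaussian i).integrable_mul (memLp_eval_stdGaussian j)

lemma integral_eval_mul_eval_stdGaussian [DecidableEq ι] (i j : ι) :
    ∫ z : ι → ℝ, z i * z j ∂_root_.stdGaussian ι = (1 : Matrix ι ι ℝ) i j := by
  rcases eq_or_ne i j with rfl | hij
  · have hvar : ∫ t : ℝ, t * t ∂gaussianReal 0 1 = 1 := by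
      have h := variance_of_integral_eq_zero (X := id) (μ := gaussianReal 0 1) aemeasurable_id
        integral_id_gaussianReal
      simpa [variance_id_gaussianReal, sq, eq_comm] using h
    rw [one_apply_eq, ← hvar]
    exact integral_comp_eval (μ := fun _ : ι => gaussianReal 0 1) (f := fun t => t * t)
      (by fun_prop)
  · have hindep : (fun z : ι → ℝ => z i) ⟂ᵢ[_root_.stdGaussian ι] fun z => z j :=
      (iIndepFun_pi (μ := fun _ : ι => gaussianReal 0 1) (X := fun _ t => t)
        fun _ => aemeasurable_id).indepFun hij
    rw [one_apply_ne hij, hindep.integral_fun_mul_eq_mul_integral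
      (memLp_eval_stdGaussian i).aestronglyMeasurable
      (memLp_eval_stdGaussian j).aestronglyMeasurable,
      integral_eval_stdGaussian, zero_mul]

lemma dotProduct_mulVec_eq_sum {R : Type*} [CommSemiring R] (M : Matrix ι ι R) (z : ι → R) :
    z ⬝ᵥ M *ᵥ z = ∑ i, ∑ j, M i j * (z i * z j) := by
  simp only [dotProduct, mulVec, Finset.mul_sum]
  exact Finset.sum_congr rfl fun _ _ => Finset.sum_congr rfl fun _ _ => mul_left_comm _ _ _

lemma integrable_dotProduct_mulVec_stdGaussian (M : Matrix ι ι ℝ) :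
    Integrable (fun z => z ⬝ᵥ M *ᵥ z) (_root_.stdGaussian ι) := by
  simp only [dotProduct_mulVec_eq_sum]
  exact integrable_finsetSum _ fun i _ => integrable_finsetSum _ fun j _ =>
    (integrable_eval_mul_eval_stdGaussian i j).const_mul _

lemma integral_dotProduct_mulVec_stdGaussian (M : Matrix ι ι ℝ) :
    ∫ z, z ⬝ᵥ M *ᵥ z ∂_root_.stdGaussian ι = M.trace := by
  classical
  have hint (i j : ι) := (integrable_eval_mul_eval_stdGaussian i j).const_mul (M i j)
  simp only [dotProduct_mulVec_eq_sum]
  rw [integral_finsetSum _ fun i _ => integrable_finsetSum _ fun j _ => hint i j]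
  simp only [integral_finsetSum _ fun j _ => hint _ j, integral_const_mul,
    integral_eval_mul_eval_stdGaussian, one_apply, mul_ite, mul_one, mul_zero, Finset.sum_ite_eq,
    Finset.mem_univ, if_true, Matrix.trace, diag_apply]

end StandardGaussian

section GaussianLaw

variable {ι κ : Type*} [Fintype κ]

/-- The centered Gaussian law with covariance matrix `B Bᵀ`, realized as the law of `B z` for a
standard Gaussian vector `z`. -/
def gaussianLaw (B : Matrix ι κ ℝ) : Measure (ι → ℝ) :=
  (_root_.stdGaussian κ).map (B *ᵥ ·)

lemma measurable_mulVec (B : Matrix ι κ ℝ) : Measurable (B *ᵥ · : (κ → ℝ) → ι → ℝ) :=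
  measurable_pi_lambda _ fun _ => (continuous_const.dotProduct continuous_id).measurable

instance isProbabilityMeasure_gaussianLaw (B : Matrix ι κ ℝ) :
    IsProbabilityMeasure (gaussianLaw B) :=
  Measure.isProbabilityMeasure_map (measurable_mulVec B).aemeasurable

variable [Fintype ι]

lemma mulVec_dotProduct_mulVec_mulVec {R : Type*} [CommSemiring R] (B : Matrix ι κ R)
    (M : Matrix ι ι R) (z : κ → R) :
    (B *ᵥ z) ⬝ᵥ M *ᵥ (B *ᵥ z) = z ⬝ᵥ (Bᵀ * M * B) *ᵥ z := by
  rw [← mulVec_mulVec, ← mulVec_mulVec, dotProduct_mulVec z, vecMul_transpose]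

lemma measurable_dotProduct_mulVec (M : Matrix ι ι ℝ) :
    Measurable fun x : ι → ℝ => x ⬝ᵥ M *ᵥ x :=
  (continuous_id.dotProduct (Continuous.matrix_mulVec continuous_const continuous_id)).measurable

lemma integrable_dotProduct_mulVec_gaussianLaw (B : Matrix ι κ ℝ) (M : Matrix ι ι ℝ) :
    Integrable (fun x => x ⬝ᵥ M *ᵥ x) (gaussianLaw B) := by
  rw [gaussianLaw, integrable_map_measure
    (measurable_dotProduct_mulVec M).aestronglyMeasurable (measurable_mulVec B).aemeasurable]
  simpa only [Function.comp_def, mulVec_dotProduct_mulVec_mulVec] using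
    integrable_dotProduct_mulVec_stdGaussian (Bᵀ * M * B)

lemma integral_dotProduct_mulVec_gaussianLaw (B : Matrix ι κ ℝ) (M : Matrix ι ι ℝ) :
    ∫ x, x ⬝ᵥ M *ᵥ x ∂gaussianLaw B = (M * (B * Bᵀ)).trace := by
  rw [gaussianLaw, integral_map (measurable_mulVec B).aemeasurable
    (measurable_dotProduct_mulVec M).aestronglyMeasurable]
  simp only [mulVec_dotProduct_mulVec_mulVec]
  rw [integral_dotProduct_mulVec_stdGaussian, Matrix.mul_assoc, trace_mul_comm, Matrix.mul_assoc]

end GaussianLaw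

section GaussianDensity

lemma pi_withDensity_ofReal {ι : Type*} [Fintype ι] {E : ι → Type*} [∀ i, MeasurableSpace (E i)]
    {μ : ∀ i, Measure (E i)} [∀ i, SigmaFinite (μ i)] {f : ∀ i, E i → ℝ}
    (hf : ∀ i, Integrable (f i) (μ i)) (hf_nonneg : ∀ i x, 0 ≤ f i x) :
    Measure.pi (fun i => (μ i).withDensity fun x => ENNReal.ofReal (f i x)) =
      (Measure.pi μ).withDensity fun x => ENNReal.ofReal (∏ i, f i (x i)) := by
  refine Measure.pi_eq fun s hs => ?_
  have hfs (i : ι) : Integrable (f i) ((μ i).restrict (s i)) := (hf i).restrict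
  rw [withDensity_apply _ (MeasurableSet.univ_pi hs)]
  calc ∫⁻ x in Set.univ.pi s, ENNReal.ofReal (∏ i, f i (x i)) ∂Measure.pi μ
  _ = ENNReal.ofReal (∏ i, ∫ x in s i, f i x ∂μ i) := by
    rw [Measure.restrict_pi_pi, ← ofReal_integral_eq_lintegral_ofReal
      (Integrable.fintype_prod_dep hfs)
      (ae_of_all _ fun x => Finset.prod_nonneg fun i _ => hf_nonneg i (x i)),
      integral_fintype_prod_eq_prod]
  _ = ∏ i, (μ i).withDensity (fun x => ENNReal.ofReal (f i x)) (s i) := by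
    rw [ENNReal.ofReal_prod_of_nonneg fun i _ => integral_nonneg (hf_nonneg i)]
    refine Finset.prod_congr rfl fun i _ => ?_
    rw [withDensity_apply _ (hs i),
      ofReal_integral_eq_lintegral_ofReal (hfs i) (ae_of_all _ (hf_nonneg i))]

variable {ι : Type*} [Fintype ι] [DecidableEq ι]

lemma map_mulVec_withDensity {B : Matrix ι ι ℝ} (hB : B.det ≠ 0) {f : (ι → ℝ) → ENNReal}
    (hf : Measurable f) :
    (volume.withDensity f).map (B *ᵥ ·) =
      volume.withDensity fun x => ENNReal.ofReal |B.det⁻¹| * f (B⁻¹ *ᵥ x) := by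
  have hf_inv : Measurable fun x => f (B⁻¹ *ᵥ x) := hf.comp (measurable_mulVec B⁻¹)
  have hvol : (volume : Measure (ι → ℝ)).map (B *ᵥ ·) = ENNReal.ofReal |B.det⁻¹| • volume :=
    Real.map_matrix_volume_pi_eq_smul_volume_pi hB
  have hsmul : (fun x => ENNReal.ofReal |B.det⁻¹| * f (B⁻¹ *ᵥ x)) =
      ENNReal.ofReal |B.det⁻¹| • fun x => f (B⁻¹ *ᵥ x) := rfl
  rw [hsmul, withDensity_smul _ hf_inv, ← withDensity_smul_measure, ← hvol]
  ext s hs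
  rw [Measure.map_apply (measurable_mulVec B) hs, withDensity_apply _ hs,
    withDensity_apply _ (measurable_mulVec B hs), setLIntegral_map hs hf_inv (measurable_mulVec B)]
  simp only [mulVec_mulVec, nonsing_inv_mul _ hB.isUnit, one_mulVec]

/-- The density of the centered Gaussian law on `ι → ℝ` with covariance matrix `C`. -/
def centeredGaussianPDFReal (C : Matrix ι ι ℝ) (x : ι → ℝ) : ℝ :=
  (√((2 * Real.pi) ^ Fintype.card ι * C.det))⁻¹ * Real.exp (-(x ⬝ᵥ C⁻¹ *ᵥ x) / 2)

lemma centeredGaussianPDFReal_pos {C : Matrix ι ι ℝ} (hC : 0 < C.det) (x : ι → ℝ) :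
    0 < centeredGaussianPDFReal C x := by
  unfold centeredGaussianPDFReal
  positivity

lemma measurable_centeredGaussianPDFReal (C : Matrix ι ι ℝ) :
    Measurable (centeredGaussianPDFReal C) :=
  ((measurable_dotProduct_mulVec C⁻¹).neg.div_const 2).exp.const_mul _

lemma log_centeredGaussianPDFReal {C : Matrix ι ι ℝ} (hC : 0 < C.det) (x : ι → ℝ) :
    Real.log (centeredGaussianPDFReal C x) =
      -(Fintype.card ι * Real.log (2 * Real.pi) + Real.log C.det + x ⬝ᵥ C⁻¹ *ᵥ x) / 2 := by
  rw [centeredGaussianPDFReal, Real.log_mul (by positivity) (Real.exp_pos _).ne', Real.log_inv,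
    Real.log_sqrt (by positivity), Real.log_mul (by positivity) hC.ne', Real.log_pow, Real.log_exp]
  ring

lemma prod_gaussianPDFReal (x : ι → ℝ) :
    ∏ i, gaussianPDFReal 0 1 (x i) = centeredGaussianPDFReal 1 x := by
  have hsqrt : √((2 * Real.pi) ^ Fintype.card ι) = √(2 * Real.pi) ^ Fintype.card ι := by
    simpa using Real.sqrt_prod Finset.univ (x := fun _ : ι => 2 * Real.pi)
      fun _ _ => by positivity
  simp only [gaussianPDFReal, centeredGaussianPDFReal, Finset.prod_mul_distrib, Finset.prod_const,
    Finset.card_univ, ← Real.exp_sum, NNReal.coe_one, mul_one, sub_zero, det_one, inv_one,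
    one_mulVec, dotProduct, ← sq, ← Finset.sum_div, Finset.sum_neg_distrib, inv_pow, hsqrt]

lemma stdGaussian_eq_withDensity :
    _root_.stdGaussian ι =
      volume.withDensity fun x => ENNReal.ofReal (centeredGaussianPDFReal 1 x) := by
  simp only [← prod_gaussianPDFReal]
  rw [_root_.stdGaussian, gaussianReal_of_var_ne_zero 0 one_ne_zero]
  exact pi_withDensity_ofReal (fun _ => integrable_gaussianPDFReal 0 1)
    fun _ => gaussianPDFReal_nonneg 0 1

lemma centeredGaussianPDFReal_mul_transpose (B : Matrix ι ι ℝ) (x : ι → ℝ) :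
    centeredGaussianPDFReal (B * Bᵀ) x =
      |B.det⁻¹| * centeredGaussianPDFReal 1 (B⁻¹ *ᵥ x) := by
  have hquad : (B⁻¹ *ᵥ x) ⬝ᵥ (1 : Matrix ι ι ℝ)⁻¹ *ᵥ (B⁻¹ *ᵥ x) = x ⬝ᵥ (B * Bᵀ)⁻¹ *ᵥ x := by
    rw [mulVec_dotProduct_mulVec_mulVec, inv_one, Matrix.mul_one, Matrix.mul_inv_rev,
      transpose_nonsing_inv]
  rw [centeredGaussianPDFReal, centeredGaussianPDFReal, hquad, det_mul, det_transpose, det_one,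
    mul_one, Real.sqrt_mul (by positivity), Real.sqrt_mul_self_eq_abs, mul_inv, abs_inv]
  ring

lemma gaussianLaw_eq_withDensity {B : Matrix ι ι ℝ} (hB : B.det ≠ 0) :
    gaussianLaw B =
      volume.withDensity fun x => ENNReal.ofReal (centeredGaussianPDFReal (B * Bᵀ) x) := by
  rw [gaussianLaw, stdGaussian_eq_withDensity,
    map_mulVec_withDensity hB (measurable_centeredGaussianPDFReal 1).ennreal_ofReal]
  simp only [centeredGaussianPDFReal_mul_transpose, ENNReal.ofReal_mul (abs_nonneg _)]

theorem klDivReal_gaussianLaw {B₁ B₂ : Matrix ι ι ℝ} (hB₁ : B₁.det ≠ 0) (hB₂ : B₂.det ≠ 0) :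
    klDivReal (gaussianLaw B₁) (gaussianLaw B₂) =
      (Real.log ((B₂ * B₂ᵀ).det / (B₁ * B₁ᵀ).det) - Fintype.card ι +
        ((B₂ * B₂ᵀ)⁻¹ * (B₁ * B₁ᵀ)).trace) / 2 := by
  have hdet {B : Matrix ι ι ℝ} (hB : B.det ≠ 0) : 0 < (B * Bᵀ).det := by
    rw [det_mul, det_transpose]
    exact mul_self_pos.2 hB
  have hlog (x : ι → ℝ) :
      Real.log (centeredGaussianPDFReal (B₁ * B₁ᵀ) x) -
          Real.log (centeredGaussianPDFReal (B₂ * B₂ᵀ) x) =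
        (Real.log ((B₂ * B₂ᵀ).det / (B₁ * B₁ᵀ).det) +
          x ⬝ᵥ ((B₂ * B₂ᵀ)⁻¹ - (B₁ * B₁ᵀ)⁻¹) *ᵥ x) / 2 := by
    rw [log_centeredGaussianPDFReal (hdet hB₁), log_centeredGaussianPDFReal (hdet hB₂),
      Real.log_div (hdet hB₂).ne' (hdet hB₁).ne', sub_mulVec, dotProduct_sub]
    ring
  have hkl := klDivReal_withDensity (ν := volume)
    (measurable_centeredGaussianPDFReal (B₁ * B₁ᵀ)) (measurable_centeredGaussianPDFReal (B₂ * B₂ᵀ))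
    (centeredGaussianPDFReal_pos (hdet hB₁)) (centeredGaussianPDFReal_pos (hdet hB₂))
  rw [← gaussianLaw_eq_withDensity hB₁, ← gaussianLaw_eq_withDensity hB₂] at hkl
  simp only [hkl, hlog]
  rw [integral_div,
    integral_add (integrable_const _) (integrable_dotProduct_mulVec_gaussianLaw _ _),
    integral_const, probReal_univ, one_smul, integral_dotProduct_mulVec_gaussianLaw, Matrix.sub_mul,
    nonsing_inv_mul _ (hdet hB₁).ne'.isUnit, trace_sub, trace_one]
  ring

end GaussianDensity

section RegressionCovariance

variable {m R : Type*} [DecidableEq m]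

section CommRing

variable [CommRing R]

/-- The matrix of the linear map `(x, ε) ↦ (x, wᵀ x + ε)` turning a covariate and a noise term into
a covariate and its linear response. -/
def shear (w : m → R) : Matrix (m ⊕ Unit) (m ⊕ Unit) R :=
  fromBlocks 1 0 (replicateRow Unit w) 1

lemma shear_zero : shear (0 : m → R) = 1 := by
  rw [shear, replicateRow_zero, fromBlocks_one]

variable [Fintype m]

lemma shear_mul_shear (w₁ w₂ : m → R) : shear w₁ * shear w₂ = shear (w₁ + w₂) := by
  simp [shear, fromBlocks_multiply]

lemma shear_inv (w : m → R) : (shear w)⁻¹ = shear (-w) := by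
  refine inv_eq_right_inv ?_
  rw [shear_mul_shear, add_neg_cancel, shear_zero]

lemma det_shear (w : m → R) : (shear w).det = 1 := by
  simp [shear]

/-- The covariance matrix of `(x, wᵀ x + ε)`, where `x` has covariance matrix `X` and `ε` is an
independent noise of variance `v`. -/
def regressionCov (X : Matrix m m R) (w : m → R) (v : R) : Matrix (m ⊕ Unit) (m ⊕ Unit) R :=
  shear w * fromBlocks X 0 0 (of fun _ _ => v) * (shear w)ᵀ

lemma regressionCov_eq_fromBlocks (X : Matrix m m R) (w : m → R) (v : R) :
    regressionCov X w v = fromBlocks X (replicateCol Unit (X *ᵥ w)) (replicateRow Unit (w ᵥ* X))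
      (of fun _ _ => w ⬝ᵥ X *ᵥ w + v) := by
  have hcorner : replicateRow Unit (w ᵥ* X) * replicateCol Unit w + of (fun _ _ => v) =
      of fun _ _ => w ⬝ᵥ X *ᵥ w + v := by
    ext
    simp [replicateRow_mul_replicateCol_apply, dotProduct_mulVec]
  simp [regressionCov, shear, fromBlocks_transpose, fromBlocks_multiply, replicateCol_mulVec,
    replicateRow_vecMul, ← hcorner]

lemma det_regressionCov (X : Matrix m m R) (w : m → R) (v : R) :
    (regressionCov X w v).det = X.det * v := by
  simp [regressionCov, det_shear]

end CommRing

lemma trace_inv_regressionCov_mul [Fintype m] [Field R] {X : Matrix m m R} (hX : X.det ≠ 0)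
    (w₁ w₂ : m → R) (v₁ : R) {v₂ : R} (hv₂ : v₂ ≠ 0) :
    ((regressionCov X w₂ v₂)⁻¹ * regressionCov X w₁ v₁).trace =
      Fintype.card m + ((w₁ - w₂) ⬝ᵥ X *ᵥ (w₁ - w₂) + v₁) / v₂ := by
  set D : R → Matrix (m ⊕ Unit) (m ⊕ Unit) R := fun v => fromBlocks X 0 0 (of fun _ _ => v) with hD
  have hD_inv : (D v₂)⁻¹ = fromBlocks X⁻¹ 0 0 (of fun _ _ => v₂⁻¹) := by
    have hv : (of fun _ _ => v₂ : Matrix Unit Unit R) * (of fun _ _ => v₂⁻¹) = 1 := by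
      ext
      simp [mul_apply, mul_inv_cancel₀ hv₂]
    refine inv_eq_right_inv ?_
    simp [hD, fromBlocks_multiply, mul_nonsing_inv _ hX.isUnit, hv]
  calc ((regressionCov X w₂ v₂)⁻¹ * regressionCov X w₁ v₁).trace
  _ = ((shear (-w₂))ᵀ * ((D v₂)⁻¹ * (shear (-w₂) * shear w₁) * D v₁ * (shear w₁)ᵀ)).trace := by
    rw [regressionCov, regressionCov, Matrix.mul_inv_rev, Matrix.mul_inv_rev,
      ← transpose_nonsing_inv, shear_inv]
    simp only [Matrix.mul_assoc, hD]
  _ = ((D v₂)⁻¹ * regressionCov X (w₁ - w₂) v₁).trace := by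
    rw [trace_mul_comm, regressionCov, sub_eq_neg_add, ← shear_mul_shear, transpose_mul]
    simp only [Matrix.mul_assoc, hD]
  _ = (X⁻¹ * X).trace + v₂⁻¹ * ((w₁ - w₂) ⬝ᵥ X *ᵥ (w₁ - w₂) + v₁) := by
    rw [hD_inv, regressionCov_eq_fromBlocks, fromBlocks_multiply]
    simp [Matrix.trace, mul_apply]
  _ = Fintype.card m + ((w₁ - w₂) ⬝ᵥ X *ᵥ (w₁ - w₂) + v₁) / v₂ := by
    rw [nonsing_inv_mul _ hX.isUnit, trace_one, inv_mul_eq_div]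

end RegressionCovariance

lemma klDivReal_gaussianLaw_of_eq_regressionCov {m : Type*} [Fintype m] [DecidableEq m]
    {X : Matrix m m ℝ} (hX : X.det ≠ 0) {w₁ w₂ : m → ℝ} {v₁ v₂ : ℝ} (hv₁ : v₁ ≠ 0) (hv₂ : v₂ ≠ 0)
    {B₁ B₂ : Matrix (m ⊕ Unit) (m ⊕ Unit) ℝ} (hB₁ : B₁ * B₁ᵀ = regressionCov X w₁ v₁)
    (hB₂ : B₂ * B₂ᵀ = regressionCov X w₂ v₂) :
    klDivReal (gaussianLaw B₁) (gaussianLaw B₂) =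
      (Real.log (v₂ / v₁) - 1 + ((w₁ - w₂) ⬝ᵥ X *ᵥ (w₁ - w₂) + v₁) / v₂) / 2 := by
  have hdet {B : Matrix (m ⊕ Unit) (m ⊕ Unit) ℝ} {w : m → ℝ} {v : ℝ} (hv : v ≠ 0)
      (hB : B * Bᵀ = regressionCov X w v) : B.det ≠ 0 := by
    have h := congrArg det hB
    rw [det_mul, det_regressionCov] at h
    exact left_ne_zero_of_mul (h ▸ mul_ne_zero hX hv)
  rw [klDivReal_gaussianLaw (hdet hv₁ hB₁) (hdet hv₂ hB₂), hB₁, hB₂, det_regressionCov,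
    det_regressionCov, mul_div_mul_left _ _ hX, trace_inv_regressionCov_mul hX _ _ _ hv₂,
    Fintype.card_sum, Fintype.card_unit]
  push_cast
  ring

section FactorModel

variable {m k : Type*} [Fintype k] (A : Matrix m k ℝ) {S : Matrix k k ℝ} {Γ : Matrix m m ℝ}

/-- The covariance matrix `A S Aᵀ + Γ` of the covariate `x = A z + u` in a factor model, where the
latent factor `z` has covariance `S` and the noise `u` has covariance `Γ`. -/
def covariateCov (S : Matrix k k ℝ) (Γ : Matrix m m ℝ) : Matrix m m ℝ := A * S * Aᵀ + Γ

/-- The covariance matrix of `(x, y)`, where `x = A z + u` is the covariate of a factor model and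
`y = βᵀ z + ε` is a response with noise variance `σ2`; the analogue of `fullCov` for arbitrary
index types. -/
def factorCov (S : Matrix k k ℝ) (Γ : Matrix m m ℝ) (σ2 : ℝ) (β : k → ℝ) :
    Matrix (m ⊕ Unit) (m ⊕ Unit) ℝ :=
  fromBlocks (covariateCov A S Γ) (of fun i _ => (A *ᵥ S *ᵥ β) i)
    (of fun _ j => (A *ᵥ S *ᵥ β) j) (of fun _ _ => β ⬝ᵥ S *ᵥ β + σ2)

lemma posDef_covariateCov [Finite m] (hS : S.PosSemidef) (hΓ : Γ.PosDef) :
    (covariateCov A S Γ).PosDef :=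
  PosDef.posSemidef_add (hS.mul_mul_conjTranspose_same A) hΓ

variable [Fintype m] [DecidableEq m]

/-- The coefficient vector of the best linear predictor of the response `y = βᵀ z + ε` from the
covariate `x = A z + u`. -/
def predictorCoeff (S : Matrix k k ℝ) (Γ : Matrix m m ℝ) (β : k → ℝ) : m → ℝ :=
  (covariateCov A S Γ)⁻¹ *ᵥ A *ᵥ S *ᵥ β

lemma predictorCoeff_sub (S : Matrix k k ℝ) (Γ : Matrix m m ℝ) (β₁ β₂ : k → ℝ) :
    predictorCoeff A S Γ (β₁ - β₂) = predictorCoeff A S Γ β₁ - predictorCoeff A S Γ β₂ := by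
  simp only [predictorCoeff, mulVec_sub]

lemma covariateCov_mulVec_predictorCoeff (hS : S.PosSemidef) (hΓ : Γ.PosDef) (β : k → ℝ) :
    covariateCov A S Γ *ᵥ predictorCoeff A S Γ β = A *ᵥ S *ᵥ β := by
  rw [predictorCoeff, mulVec_mulVec,
    mul_nonsing_inv _ (posDef_covariateCov A hS hΓ).det_pos.ne'.isUnit, one_mulVec]

variable [DecidableEq k]

/-- The precision matrix `S⁻¹ + Aᵀ Γ⁻¹ A` of the latent factor `z` given the covariate
`x = A z + u`; the paper's `G`. -/
def latentPrecision (S : Matrix k k ℝ) (Γ : Matrix m m ℝ) : Matrix k k ℝ := S⁻¹ + Aᵀ * Γ⁻¹ * A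

lemma posDef_latentPrecision (hS : S.PosDef) (hΓ : Γ.PosDef) : (latentPrecision A S Γ).PosDef :=
  hS.inv.add_posSemidef (hΓ.inv.posSemidef.conjTranspose_mul_mul_same A)

lemma inv_latentPrecision (hS : S.PosDef) (hΓ : Γ.PosDef) :
    (latentPrecision A S Γ)⁻¹ = S - S * Aᵀ * (covariateCov A S Γ)⁻¹ * A * S := by
  have hX : IsUnit (Γ⁻¹⁻¹ + A * S⁻¹⁻¹ * Aᵀ) := by
    rw [nonsing_inv_nonsing_inv _ hΓ.det_pos.ne'.isUnit,
      nonsing_inv_nonsing_inv _ hS.det_pos.ne'.isUnit, add_comm]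
    exact (posDef_covariateCov A hS.posSemidef hΓ).isUnit
  rw [latentPrecision, add_mul_mul_inv_eq_sub _ _ _ _ hS.inv.isUnit hΓ.inv.isUnit hX,
    nonsing_inv_nonsing_inv _ hΓ.det_pos.ne'.isUnit,
    nonsing_inv_nonsing_inv _ hS.det_pos.ne'.isUnit, add_comm, covariateCov]

lemma predictorCoeff_dotProduct_covariateCov_mulVec (hS : S.PosDef) (hΓ : Γ.PosDef) (β : k → ℝ) :
    predictorCoeff A S Γ β ⬝ᵥ covariateCov A S Γ *ᵥ predictorCoeff A S Γ β =
      β ⬝ᵥ (S - (latentPrecision A S Γ)⁻¹) *ᵥ β := by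
  have hST : Sᵀ = S := hS.isHermitian
  rw [covariateCov_mulVec_predictorCoeff A hS.posSemidef hΓ, inv_latentPrecision A hS hΓ,
    sub_sub_cancel, dotProduct_comm, predictorCoeff, mulVec_mulVec β,
    mulVec_dotProduct_mulVec_mulVec, transpose_mul, hST]
  simp only [Matrix.mul_assoc]

lemma factorCov_eq_regressionCov (hS : S.PosDef) (hΓ : Γ.PosDef) (σ2 : ℝ) (β : k → ℝ) :
    factorCov A S Γ σ2 β = regressionCov (covariateCov A S Γ) (predictorCoeff A S Γ β)
      (σ2 + β ⬝ᵥ (latentPrecision A S Γ)⁻¹ *ᵥ β) := by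
  have hXT : (covariateCov A S Γ)ᵀ = covariateCov A S Γ :=
    (posDef_covariateCov A hS.posSemidef hΓ).isHermitian
  have hvec : predictorCoeff A S Γ β ᵥ* covariateCov A S Γ = A *ᵥ S *ᵥ β := by
    rw [← mulVec_transpose, hXT, covariateCov_mulVec_predictorCoeff A hS.posSemidef hΓ]
  have hvar : β ⬝ᵥ S *ᵥ β + σ2 = β ⬝ᵥ (S - (latentPrecision A S Γ)⁻¹) *ᵥ β +
      (σ2 + β ⬝ᵥ (latentPrecision A S Γ)⁻¹ *ᵥ β) := by
    rw [sub_mulVec, dotProduct_sub]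
    ring
  rw [regressionCov_eq_fromBlocks, predictorCoeff_dotProduct_covariateCov_mulVec A hS hΓ, hvec,
    covariateCov_mulVec_predictorCoeff A hS.posSemidef hΓ, ← hvar]
  rfl

end FactorModel

section OperatorNorm

variable {k : Type*} [Fintype k] [DecidableEq k]

lemma dotProduct_mulVec_le_norm_toEuclideanCLM (M : Matrix k k ℝ) (x : k → ℝ) :
    x ⬝ᵥ M *ᵥ x ≤ ‖toEuclideanCLM (𝕜 := ℝ) M‖ * ∑ i, x i ^ 2 := by
  calc x ⬝ᵥ M *ᵥ x
  _ = inner ℝ (WithLp.toLp 2 x) (toEuclideanCLM (𝕜 := ℝ) M (WithLp.toLp 2 x)) := by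
    rw [inner_toEuclideanCLM]
  _ ≤ ‖WithLp.toLp 2 x‖ * (‖toEuclideanCLM (𝕜 := ℝ) M‖ * ‖WithLp.toLp 2 x‖) :=
    (real_inner_le_norm _ _).trans
      (mul_le_mul_of_nonneg_left (ContinuousLinearMap.le_opNorm _ _) (norm_nonneg _))
  _ = ‖toEuclideanCLM (𝕜 := ℝ) M‖ * ∑ i, x i ^ 2 := by
    rw [mul_left_comm, ← sq, EuclideanSpace.real_norm_sq_eq]

lemma div_norm_toEuclideanCLM_le_dotProduct_inv_mulVec {G : Matrix k k ℝ} (hG : G.PosDef)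
    (x : k → ℝ) :
    (∑ i, x i ^ 2) / ‖toEuclideanCLM (𝕜 := ℝ) G‖ ≤ x ⬝ᵥ G⁻¹ *ᵥ x := by
  set N := ‖toEuclideanCLM (𝕜 := ℝ) G‖ with hN
  rcases (norm_nonneg _ : 0 ≤ N).eq_or_lt with hN_zero | hN_pos
  · rw [hN, ← hN_zero, div_zero]
    exact hG.inv.posSemidef.dotProduct_mulVec_nonneg x
  have hsq : x ⬝ᵥ x = ∑ i, x i ^ 2 := by simp only [dotProduct, sq]
  have hGinv : G *ᵥ G⁻¹ *ᵥ x = x := by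
    rw [mulVec_mulVec, mul_nonsing_inv _ hG.det_pos.ne'.isUnit, one_mulVec]
  have hsymm : (G⁻¹ *ᵥ x) ⬝ᵥ G *ᵥ x = x ⬝ᵥ x := by
    have hGT : Gᵀ = G := hG.isHermitian
    rw [dotProduct_mulVec, ← mulVec_transpose, hGT, hGinv]
  -- The quadratic form of `G` at `G⁻¹ x - N⁻¹ x` is `x · G⁻¹ x - 2 N⁻¹ |x|² + N⁻² (x · G x)`.
  have hnonneg : 0 ≤ x ⬝ᵥ G⁻¹ *ᵥ x - 2 * N⁻¹ * (x ⬝ᵥ x) + N⁻¹ ^ 2 * (x ⬝ᵥ G *ᵥ x) := by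
    have h := hG.posSemidef.dotProduct_mulVec_nonneg (G⁻¹ *ᵥ x - N⁻¹ • x)
    simp only [star_trivial, mulVec_sub, mulVec_smul, sub_dotProduct, dotProduct_sub,
      smul_dotProduct, dotProduct_smul, smul_eq_mul, hGinv, hsymm,
      dotProduct_comm (G⁻¹ *ᵥ x) x] at h
    linarith
  have hquad : N⁻¹ ^ 2 * (x ⬝ᵥ G *ᵥ x) ≤ N⁻¹ * (x ⬝ᵥ x) := by
    calc N⁻¹ ^ 2 * (x ⬝ᵥ G *ᵥ x)
    _ ≤ N⁻¹ ^ 2 * (N * (x ⬝ᵥ x)) := by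
      rw [hsq]
      gcongr
      exact dotProduct_mulVec_le_norm_toEuclideanCLM G x
    _ = N⁻¹ * (x ⬝ᵥ x) := by field_simp
  rw [← hsq, div_eq_inv_mul]
  linarith

end OperatorNorm

lemma log_div_sub_one_add_div_le {D q v₁ v₂ : ℝ} (hD : 0 < D) (hv₁ : D ≤ v₁) (hv₂ : D ≤ v₂)
    (hq : 0 ≤ q) : Real.log (v₂ / v₁) - 1 + (q + v₁) / v₂ ≤ (|v₁ - v₂| + q) / D := by
  have hv₁_pos : 0 < v₁ := hD.trans_le hv₁
  have hv₂_pos : 0 < v₂ := hD.trans_le hv₂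
  have hratio : v₂ / v₁ - 1 + (v₁ / v₂ - 1) ≤ |v₁ - v₂| / D := by
    rcases le_total v₁ v₂ with h | h
    · have h₁ : v₂ / v₁ - 1 ≤ (v₂ - v₁) / D := by
        rw [div_sub_one hv₁_pos.ne']
        exact div_le_div_of_nonneg_left (sub_nonneg.2 h) hD hv₁
      have h₂ : v₁ / v₂ ≤ 1 := (div_le_one hv₂_pos).2 h
      rw [abs_sub_comm, abs_of_nonneg (sub_nonneg.2 h)]
      linarith
    · have h₁ : v₁ / v₂ - 1 ≤ (v₁ - v₂) / D := by
        rw [div_sub_one hv₂_pos.ne']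
        exact div_le_div_of_nonneg_left (sub_nonneg.2 h) hD hv₂
      have h₂ : v₂ / v₁ ≤ 1 := (div_le_one hv₁_pos).2 h
      rw [abs_of_nonneg (sub_nonneg.2 h)]
      linarith
  have hlog := Real.log_le_sub_one_of_pos (div_pos hv₂_pos hv₁_pos)
  have hq_div : q / v₂ ≤ q / D := div_le_div_of_nonneg_left hq hD hv₂
  rw [add_div, add_div]
  linarith

theorem kl_divergence_upper_bound_general {m k : Type*} [Fintype m] [DecidableEq m] [Fintype k]
    [DecidableEq k] (A : Matrix m k ℝ) {S : Matrix k k ℝ} (hS : S.PosDef) {Γ : Matrix m m ℝ}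
    (hΓ : Γ.PosDef) {σ2 : ℝ} (hσ2 : 0 < σ2) (β₁ β₂ : k → ℝ)
    {B₁ B₂ : Matrix (m ⊕ Unit) (m ⊕ Unit) ℝ} (hB₁ : B₁ * B₁ᵀ = factorCov A S Γ σ2 β₁)
    (hB₂ : B₂ * B₂ᵀ = factorCov A S Γ σ2 β₂) :
    klDivReal (gaussianLaw B₁) (gaussianLaw B₂) ≤
      (|β₁ ⬝ᵥ (latentPrecision A S Γ)⁻¹ *ᵥ β₁ - β₂ ⬝ᵥ (latentPrecision A S Γ)⁻¹ *ᵥ β₂| +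
          ‖toEuclideanCLM (𝕜 := ℝ) (S - (latentPrecision A S Γ)⁻¹)‖ * ∑ i, (β₁ i - β₂ i) ^ 2) /
        (σ2 + min (∑ i, β₁ i ^ 2) (∑ i, β₂ i ^ 2) /
          ‖toEuclideanCLM (𝕜 := ℝ) (latentPrecision A S Γ)‖) / 2 := by
  set D := σ2 + min (∑ i, β₁ i ^ 2) (∑ i, β₂ i ^ 2) /
    ‖toEuclideanCLM (𝕜 := ℝ) (latentPrecision A S Γ)‖
  have hX := posDef_covariateCov A hS.posSemidef hΓ
  have hG := posDef_latentPrecision A hS hΓ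
  have hD : 0 < D := by positivity
  have hv {β : k → ℝ} (hβ : min (∑ i, β₁ i ^ 2) (∑ i, β₂ i ^ 2) ≤ ∑ i, β i ^ 2) :
      D ≤ σ2 + β ⬝ᵥ (latentPrecision A S Γ)⁻¹ *ᵥ β :=
    add_le_add_right ((div_le_div_of_nonneg_right hβ (norm_nonneg _)).trans
      (div_norm_toEuclideanCLM_le_dotProduct_inv_mulVec hG β)) σ2
  have hv₁ := hv (min_le_left _ _)
  have hv₂ := hv (min_le_right _ _)
  rw [factorCov_eq_regressionCov A hS hΓ] at hB₁ hB₂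
  rw [klDivReal_gaussianLaw_of_eq_regressionCov hX.det_pos.ne' (hD.trans_le hv₁).ne'
    (hD.trans_le hv₂).ne' hB₁ hB₂]
  gcongr
  refine (log_div_sub_one_add_div_le hD hv₁ hv₂ (hX.posSemidef.dotProduct_mulVec_nonneg
    (predictorCoeff A S Γ β₁ - predictorCoeff A S Γ β₂))).trans ?_
  rw [add_sub_add_left_eq_sub, star_trivial, ← predictorCoeff_sub,
    predictorCoeff_dotProduct_covariateCov_mulVec A hS hΓ]
  gcongr
  exact dotProduct_mulVec_le_norm_toEuclideanCLM _ (β₁ - β₂)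

/-- Lemma B.4: Kullback–Leibler bound between two Gaussian factor-regression models.
Here `P_β` is realized as the pushforward of a standard Gaussian under any matrix `B`
with `B Bᵀ` equal to the model covariance, and `G = Σ_Z⁻¹ + Aᵀ Γ⁻¹ A`. -/
theorem kl_divergence_upper_bound {p K : ℕ}
    (A : Matrix (Fin p) (Fin K) ℝ)
    (S : Matrix (Fin K) (Fin K) ℝ) (hS : S.PosDef)
    (Γ : Matrix (Fin p) (Fin p) ℝ) (hΓ : Γ.PosDef)
    (σ2 : ℝ) (hσ2 : 0 < σ2)
    (β₁ β₂ : Fin K → ℝ)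
    (B₁ B₂ : Matrix (Fin p ⊕ Unit) (Fin p ⊕ Unit) ℝ)
    (hB₁ : B₁ * B₁ᵀ = fullCov A S Γ σ2 β₁)
    (hB₂ : B₂ * B₂ᵀ = fullCov A S Γ σ2 β₂) :
    klDivReal ((stdGaussian (Fin p ⊕ Unit)).map (B₁.mulVec ·))
        ((stdGaussian (Fin p ⊕ Unit)).map (B₂.mulVec ·))
      ≤ (|β₁ ⬝ᵥ (S⁻¹ + Aᵀ * Γ⁻¹ * A)⁻¹.mulVec β₁ -
            β₂ ⬝ᵥ (S⁻¹ + Aᵀ * Γ⁻¹ * A)⁻¹.mulVec β₂| +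
          opNorm (S - (S⁻¹ + Aᵀ * Γ⁻¹ * A)⁻¹) * ∑ k, (β₁ k - β₂ k) ^ 2) /
        (σ2 + min (∑ k, β₁ k ^ 2) (∑ k, β₂ k ^ 2) / opNorm (S⁻¹ + Aᵀ * Γ⁻¹ * A)) :=
  (kl_divergence_upper_bound_general A hS hΓ hσ2 β₁ β₂ hB₁ hB₂).trans
    (half_le_self (by positivity))
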